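/- arXiv:1601.07277 — 3 statements merged into one kernel-verified Lean document; each statement's English description precedes it below -/
import Mathlib

section
/- Let n and k be positive integers with k ≤ n and let M > 0. The convex hull of the set C = {z ∈ ℝ^n : card(z) ≤ k and ‖z‖_∞ ≤ M} equals the set {z ∈ ℝ^n : ‖z‖_1 ≤ kM and ‖z‖_∞ ≤ M}. -/
/-!
The `ℓ¹` ball of radius `k * M` intersected with the box `‖z‖_∞ ≤ M` is convex, and it contains the
`k`-sparse vectors of the box. Conversely, let `z` lie in this intersection. If two coordinates have
absolute value strictly between `0` and `M`, move `ℓ¹` mass from one to the other until one of them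
leaves `(0, M)`; doing this in both directions exhibits `z` as a point of a segment whose ends have
fewer such coordinates. Once at most one of them is left, having `m` nonzero coordinates forces the
`ℓ¹` norm above `(m - 1) * M`, so that `m ≤ k`.
-/

open Finset

section LinearOrder

variable {G ι : Type*} [AddCommGroup G] [LinearOrder G] [Fintype ι]

/-- The vectors with at most `k` nonzero coordinates and sup norm at most `M`. The norm bound is
imposed coordinatewise because `G` is not assumed to be normed. -/
def sparseBox (k : ℕ) (M : G) : Set (ι → G) :=
  {z | #{i | z i ≠ 0} ≤ k ∧ ∀ i, |z i| ≤ M}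

/-- The intersection of the `ℓ¹` ball of radius `K` with the sup norm ball of radius `M`, both
centred at the origin. -/
def cappedL1Ball (K M : G) : Set (ι → G) :=
  {z | ∑ i, |z i| ≤ K ∧ ∀ i, |z i| ≤ M}

/-- The coordinates of `z` at which `|z i|` lies strictly between `0` and `M`. The
decomposition of a vector into sparse ones goes by induction on this set. -/
def fractionalCoords (M : G) (z : ι → G) : Finset ι :=
  {i | 0 < |z i| ∧ |z i| < M}

theorem mem_fractionalCoords {M : G} {z : ι → G} {i : ι} :
    i ∈ fractionalCoords M z ↔ 0 < |z i| ∧ |z i| < M := by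
  simp only [fractionalCoords, mem_filter_univ]

theorem fractionalCoords_ssubset_of_abs_eq {M : G} {z w : ι → G} {i j : ι}
    (hi : i ∈ fractionalCoords M z) (hj : j ∈ fractionalCoords M z)
    (habs : ∀ l, l ≠ i → l ≠ j → |w l| = |z l|) (hw : |w i| = M ∨ |w j| = 0) :
    fractionalCoords M w ⊂ fractionalCoords M z := by
  rw [ssubset_iff_of_subset]
  · rcases hw with hw | hw
    · exact ⟨i, hi, fun h => (mem_fractionalCoords.1 h).2.ne hw⟩
    · exact ⟨j, hj, fun h => (mem_fractionalCoords.1 h).1.ne' hw⟩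
  · intro l hl
    rcases eq_or_ne l i with rfl | hli
    · exact hi
    rcases eq_or_ne l j with rfl | hlj
    · exact hj
    · simpa only [mem_fractionalCoords, habs l hli hlj] using hl

end LinearOrder

section MassTransfer

variable {𝕜 ι : Type*} [CommRing 𝕜] [LinearOrder 𝕜] [DecidableEq ι]

/-- For `i ≠ j` and nonzero `z i`, `z j`, the direction in which `|z i|` grows and `|z j|` shrinks,
both at unit speed: moving along it transfers `ℓ¹` mass from `j` to `i`. -/
def massTransfer (z : ι → 𝕜) (i j : ι) : ι → 𝕜 :=
  Pi.single i (SignType.sign (z i) : 𝕜) - Pi.single j (SignType.sign (z j) : 𝕜)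

theorem massTransfer_swap (z : ι → 𝕜) (i j : ι) : massTransfer z j i = -massTransfer z i j :=
  (neg_sub _ _).symm

end MassTransfer

section OrderedRing

variable {𝕜 ι : Type*} [CommRing 𝕜] [LinearOrder 𝕜] [IsStrictOrderedRing 𝕜]

theorem abs_add_mul_sign {x t : 𝕜} (hx : x ≠ 0) (ht : 0 ≤ |x| + t) :
    |x + t * SignType.sign x| = |x| + t := by
  have abs_sign : |(SignType.sign x : 𝕜)| = 1 := by
    rcases hx.lt_or_gt with h | h <;> simp [h]
  calc |x + t * SignType.sign x| = |SignType.sign x * (|x| + t)| := by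
        rw [mul_add, sign_mul_abs, mul_comm t]
    _ = |x| + t := by rw [abs_mul, abs_sign, one_mul, abs_of_nonneg ht]

theorem abs_add_smul_massTransfer_apply [DecidableEq ι] {z : ι → 𝕜} {i j : ι} {t : 𝕜} (hij : i ≠ j)
    (hi : z i ≠ 0) (hj : z j ≠ 0) (ht : 0 ≤ t) (htj : t ≤ |z j|) (l : ι) :
    |(z + t • massTransfer z i j) l| =
      |z l| + ((Pi.single i t : ι → 𝕜) l - (Pi.single j t : ι → 𝕜) l) := by
  rcases eq_or_ne l i with rfl | hli
  · simpa [massTransfer, hij] using abs_add_mul_sign hi (add_nonneg (abs_nonneg (z l)) ht)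
  rcases eq_or_ne l j with rfl | hlj
  · simpa [massTransfer, hli] using
      abs_add_mul_sign hj (t := -t) (by simpa only [← sub_eq_add_neg, sub_nonneg] using htj)
  · simp [massTransfer, hli, hlj]

theorem convexOn_abs : ConvexOn 𝕜 Set.univ (abs : 𝕜 → 𝕜) :=
  (convexOn_id convex_univ).sup (concaveOn_id convex_univ).neg

theorem convexOn_abs_apply (i : ι) : ConvexOn 𝕜 Set.univ fun z : ι → 𝕜 => |z i| :=
  (convexOn_abs.comp_linearMap (LinearMap.proj i : (ι → 𝕜) →ₗ[𝕜] 𝕜) :)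

variable [Fintype ι]

theorem convexOn_sum_abs : ConvexOn 𝕜 Set.univ fun z : ι → 𝕜 => ∑ i, |z i| := by
  simpa only [Finset.sum_fn] using Finset.sum_induction (fun i (z : ι → 𝕜) => |z i|)
    (ConvexOn 𝕜 Set.univ) (fun _ _ => ConvexOn.add) (convexOn_const 0 convex_univ)
    fun i _ => convexOn_abs_apply i

theorem convex_cappedL1Ball (K M : 𝕜) : Convex 𝕜 (cappedL1Ball K M : Set (ι → 𝕜)) := by
  have eq_inter : (cappedL1Ball K M : Set (ι → 𝕜)) =
      {z ∈ Set.univ | ∑ i, |z i| ≤ K} ∩ ⋂ i, {z ∈ Set.univ | |z i| ≤ M} := by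
    ext z
    simp [cappedL1Ball]
  rw [eq_inter]
  exact (convexOn_sum_abs.convex_le K).inter
    (convex_iInter fun i => (convexOn_abs_apply i).convex_le M)

theorem sum_abs_le_card_ne_zero_mul {M : 𝕜} {z : ι → 𝕜} (hz : ∀ i, |z i| ≤ M) :
    ∑ i, |z i| ≤ #{i | z i ≠ 0} * M :=
  calc ∑ i, |z i| = ∑ i with z i ≠ 0, |z i| := by
        simpa only [ne_eq, abs_eq_zero] using (sum_filter_ne_zero (f := fun i => |z i|) univ).symm
    _ ≤ #{i | z i ≠ 0} * M := by
        simpa only [nsmul_eq_mul] using sum_le_card_nsmul _ _ M fun i _ => hz i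

theorem sparseBox_subset_cappedL1Ball (k : ℕ) {M : 𝕜} (hM : 0 ≤ M) :
    (sparseBox k M : Set (ι → 𝕜)) ⊆ cappedL1Ball (k * M) M := fun _ ⟨hcard, hbox⟩ =>
  ⟨(sum_abs_le_card_ne_zero_mul hbox).trans (by gcongr), hbox⟩

theorem sum_sub_abs_ne_zero_eq_sum_fractionalCoords {M : 𝕜} {z : ι → 𝕜} (hz : ∀ i, |z i| ≤ M) :
    ∑ i with z i ≠ 0, (M - |z i|) = ∑ i ∈ fractionalCoords M z, (M - |z i|) := by
  symm
  apply sum_subset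
  · intro i hi
    exact (mem_filter_univ i).2 (abs_pos.1 (mem_fractionalCoords.1 hi).1)
  · intro i hi hfrac
    have hpos : 0 < |z i| := abs_pos.2 ((mem_filter_univ i).1 hi)
    have hge : M ≤ |z i| := not_lt.1 fun hlt => hfrac (mem_fractionalCoords.2 ⟨hpos, hlt⟩)
    exact sub_eq_zero.2 (hge.antisymm (hz i))

theorem card_ne_zero_mul_lt_sum_abs_add {M : 𝕜} (hM : 0 < M) {z : ι → 𝕜} (hz : ∀ i, |z i| ≤ M)
    (hfrac : #(fractionalCoords M z) ≤ 1) :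
    #{i | z i ≠ 0} * M < ∑ i, |z i| + M := by
  have deficit_lt : ∑ i ∈ fractionalCoords M z, (M - |z i|) < M := by
    rcases Nat.le_one_iff_eq_zero_or_eq_one.1 hfrac with h | h
    · simpa only [card_eq_zero.1 h, sum_empty] using hM
    · obtain ⟨i, h⟩ := card_eq_one.1 h
      have hi : i ∈ fractionalCoords M z := h ▸ mem_singleton_self i
      simpa only [h, sum_singleton, sub_lt_self_iff] using (mem_fractionalCoords.1 hi).1
  calc #{i | z i ≠ 0} * M = ∑ i with z i ≠ 0, |z i| + ∑ i with z i ≠ 0, (M - |z i|) := by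
        simp only [← sum_add_distrib, add_sub_cancel, sum_const, nsmul_eq_mul]
    _ < ∑ i, |z i| + M := by
        rw [sum_sub_abs_ne_zero_eq_sum_fractionalCoords hz]
        exact add_lt_add_of_le_of_lt
          (sum_le_univ_sum_of_nonneg fun i => abs_nonneg (z i)) deficit_lt

theorem mem_sparseBox_of_card_fractionalCoords_le_one {k : ℕ} {M : 𝕜} (hM : 0 < M) {z : ι → 𝕜}
    (hz : z ∈ cappedL1Ball (k * M) M) (hfrac : #(fractionalCoords M z) ≤ 1) :
    z ∈ sparseBox k M := by
  have hlt : (#{i | z i ≠ 0} : 𝕜) * M < (k + 1 : ℕ) * M :=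
    calc (#{i | z i ≠ 0} : 𝕜) * M < ∑ i, |z i| + M := card_ne_zero_mul_lt_sum_abs_add hM hz.2 hfrac
      _ ≤ k * M + M := by gcongr; exact hz.1
      _ = (k + 1 : ℕ) * M := by push_cast; ring
  exact ⟨Nat.lt_succ_iff.1 (Nat.cast_lt.1 (lt_of_mul_lt_mul_right hlt hM.le)), hz.2⟩

variable [DecidableEq ι] {z : ι → 𝕜} {i j : ι} {t : 𝕜}

theorem add_smul_massTransfer_mem_cappedL1Ball {K M : 𝕜} (hz : z ∈ cappedL1Ball K M) (hij : i ≠ j)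
    (hi : z i ≠ 0) (hj : z j ≠ 0) (ht : 0 ≤ t) (hti : t ≤ M - |z i|) (htj : t ≤ |z j|) :
    z + t • massTransfer z i j ∈ cappedL1Ball K M := by
  have habs := abs_add_smul_massTransfer_apply hij hi hj ht htj
  constructor
  · simp only [habs]
    simpa [sum_add_distrib] using hz.1
  · intro l
    rw [habs]
    rcases eq_or_ne l i with rfl | hli
    · simpa [hij] using le_sub_iff_add_le'.1 hti
    · calc |z l| + ((Pi.single i t : ι → 𝕜) l - (Pi.single j t : ι → 𝕜) l) ≤ |z l| := by
            simpa [hli] using (Pi.single_nonneg.2 ht : (0 : ι → 𝕜) ≤ Pi.single j t) l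
        _ ≤ M := hz.2 l

theorem exists_add_smul_massTransfer_mem_cappedL1Ball_fractionalCoords_ssubset {K M : 𝕜}
    (hz : z ∈ cappedL1Ball K M) (hij : i ≠ j) (hi : i ∈ fractionalCoords M z)
    (hj : j ∈ fractionalCoords M z) :
    ∃ t : 𝕜, 0 ≤ t ∧ z + t • massTransfer z i j ∈ cappedL1Ball K M ∧
      fractionalCoords M (z + t • massTransfer z i j) ⊂ fractionalCoords M z := by
  obtain ⟨hi_pos, hi_lt⟩ := mem_fractionalCoords.1 hi
  obtain ⟨hj_pos, -⟩ := mem_fractionalCoords.1 hj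
  have hzi := abs_pos.1 hi_pos
  have hzj := abs_pos.1 hj_pos
  -- The largest step that keeps `|z i| ≤ M` and does not change the sign of `z j`.
  let t := min (M - |z i|) |z j|
  have ht : 0 ≤ t := le_min (sub_nonneg.2 hi_lt.le) hj_pos.le
  have htj : t ≤ |z j| := min_le_right _ _
  have habs := abs_add_smul_massTransfer_apply hij hzi hzj ht htj
  refine ⟨t, ht, add_smul_massTransfer_mem_cappedL1Ball hz hij hzi hzj ht (min_le_left _ _) htj,
    fractionalCoords_ssubset_of_abs_eq hi hj (fun l hli hlj => ?_) ?_⟩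
  · rw [habs]
    simp [hli, hlj]
  · rw [habs, habs]
    refine (min_choice (M - |z i|) |z j|).imp (fun h => ?_) fun h => ?_
    · simp [hij, t, h]
    · simp [hij.symm, t, h]

end OrderedRing

section OrderedField

variable {𝕜 : Type*} [Field 𝕜] [LinearOrder 𝕜] [IsStrictOrderedRing 𝕜]

theorem mem_segment_add_smul_sub_smul {E : Type*} [AddCommGroup E] [Module 𝕜 E] (x v : E)
    {s t : 𝕜} (hs : 0 ≤ s) (ht : 0 ≤ t) : x ∈ segment 𝕜 (x + s • v) (x - t • v) := by
  rw [mem_segment_iff_sameRay, sub_add_cancel_left, sub_sub_cancel_left, sameRay_neg_iff]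
  exact (SameRay.rfl.nonneg_smul_left hs).nonneg_smul_right ht

variable {ι : Type*} [Fintype ι]

theorem cappedL1Ball_subset_convexHull_sparseBox (k : ℕ) {M : 𝕜} (hM : 0 < M) :
    (cappedL1Ball (k * M) M : Set (ι → 𝕜)) ⊆ convexHull 𝕜 (sparseBox k M) := by
  classical
  intro z hz
  induction hF : fractionalCoords M z using Finset.strongInduction generalizing z with
  | _ F ih =>
    subst hF
    rcases le_or_gt #(fractionalCoords M z) 1 with hfrac | hfrac
    · exact subset_convexHull 𝕜 _ (mem_sparseBox_of_card_fractionalCoords_le_one hM hz hfrac)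
    · obtain ⟨i, hi, j, hj, hij⟩ := one_lt_card.1 hfrac
      obtain ⟨s, hs, hs_mem, hs_frac⟩ :=
        exists_add_smul_massTransfer_mem_cappedL1Ball_fractionalCoords_ssubset hz hij hi hj
      obtain ⟨t, ht, ht_mem, ht_frac⟩ :=
        exists_add_smul_massTransfer_mem_cappedL1Ball_fractionalCoords_ssubset hz hij.symm hj hi
      have hz_segment := mem_segment_add_smul_sub_smul z (massTransfer z i j) hs ht
      rw [sub_eq_add_neg, ← smul_neg, ← massTransfer_swap] at hz_segment
      exact (convex_convexHull 𝕜 _).segment_subset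
        (ih _ hs_frac hs_mem rfl) (ih _ ht_frac ht_mem rfl) hz_segment

theorem stmt0_general (k : ℕ) {M : 𝕜} (hM : 0 < M) :
    convexHull 𝕜 (sparseBox k M : Set (ι → 𝕜)) = cappedL1Ball (k * M) M :=
  (convexHull_min (sparseBox_subset_cappedL1Ball k hM.le) (convex_cappedL1Ball _ _)).antisymm
    (cappedL1Ball_subset_convexHull_sparseBox k hM)

end OrderedField

/-- The convex hull of the set of `k`-sparse vectors with sup norm at most `M`
equals the set of vectors with ℓ1 norm at most `k * M` and sup norm at most `M`. -/
theorem stmt0 (n k : ℕ) (hn : 0 < n) (hk : 0 < k) (hkn : k ≤ n) (M : ℝ) (hM : 0 < M) :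
    convexHull ℝ {z : Fin n → ℝ |
        (Finset.univ.filter fun i => z i ≠ 0).card ≤ k ∧ ∀ i, |z i| ≤ M} =
      {z : Fin n → ℝ | ∑ i, |z i| ≤ k * M ∧ ∀ i, |z i| ≤ M} :=
  stmt0_general k hM
end

section
/- Let A ∈ ℝ^{n×n} be symmetric positive definite, b ∈ ℝ^n, and α, β ∈ ℝ with β ≥ α ≥ −bᵀA⁻¹b. Let C = {z ∈ ℝ^n : α ≤ zᵀAz + 2bᵀz ≤ β}. Fix z ∈ C with zᵀAz + 2bᵀz + bᵀA⁻¹b > 0 and define R(z) = {x ∈ ℝ^n : (xᵀAz + bᵀ(x+z) + bᵀA⁻¹b)/√(zᵀAz + 2bᵀz + bᵀA⁻¹b) ≥ √(α + bᵀA⁻¹b) and xᵀAx + 2bᵀx ≤ β}. Then z ∈ R(z), and every x ∈ R(z) satisfies α ≤ xᵀAx + 2bᵀx ≤ β; that is, R(z) is a (convex) restriction of C containing z. -/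
open Matrix

/-!
With `A *ᵥ c = b`, completing the square gives `xᵀAx + 2bᵀx + bᵀc = ‖x + c‖²` in the seminorm of the
semi-inner product `⟨u, v⟩ = uᵀAv`, so `C` is a spherical shell centred at `-c`. The inner
constraint `√(α + bᵀc) ≤ ‖x + c‖` is nonconvex; `R(z)` replaces it by the half-space
`√(α + bᵀc) ≤ ⟨x + c, z + c⟩ / ‖z + c‖`, which implies it by Cauchy–Schwarz, with equality of the
right-hand sides at `x = z`.
-/

section QuadraticBand

variable {ι R : Type*} [Fintype ι]

section CompletingTheSquare

variable [CommSemiring R] {A : Matrix ι ι R} {b c : ι → R}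

theorem add_dotProduct_mulVec_add_of_isSymm (hA : A.IsSymm) (hc : A *ᵥ c = b) (u v : ι → R) :
    (u + c) ⬝ᵥ A *ᵥ (v + c) = u ⬝ᵥ A *ᵥ v + b ⬝ᵥ (u + v) + b ⬝ᵥ c := by
  have hcv : c ⬝ᵥ A *ᵥ v = b ⬝ᵥ v := by
    rw [dotProduct_mulVec, ← mulVec_transpose, hA.eq, hc]
  rw [mulVec_add, hc, add_dotProduct, dotProduct_add, dotProduct_add, dotProduct_add, hcv,
    dotProduct_comm u b, dotProduct_comm c b]
  ring

theorem add_dotProduct_mulVec_add_self_of_isSymm (hA : A.IsSymm) (hc : A *ᵥ c = b) (v : ι → R) :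
    (v + c) ⬝ᵥ A *ᵥ (v + c) = v ⬝ᵥ A *ᵥ v + 2 * (b ⬝ᵥ v) + b ⬝ᵥ c := by
  rw [add_dotProduct_mulVec_add_of_isSymm hA hc, dotProduct_add, two_mul]

end CompletingTheSquare

theorem dotProduct_mulVec_sq_le [CommRing R] [LinearOrder R] [IsStrictOrderedRing R] [StarRing R]
    [TrivialStar R] {A : Matrix ι ι R} (hA : A.PosSemidef) (u v : ι → R) :
    (u ⬝ᵥ A *ᵥ v) ^ 2 ≤ (u ⬝ᵥ A *ᵥ u) * (v ⬝ᵥ A *ᵥ v) := by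
  classical
  have hsymm : LinearMap.IsSymm A.toBilin' :=
    LinearMap.BilinForm.isSymm_iff.1 <| isSymm_toBilin'_iff_isSymm.2 <|
      isHermitian_iff_isSymm.1 hA.isHermitian
  have hnonneg (x : ι → R) : 0 ≤ A.toBilin' x x := by
    simpa only [toBilin'_apply', star_trivial] using hA.dotProduct_mulVec_nonneg x
  simpa only [toBilin'_apply'] using
    LinearMap.BilinForm.apply_sq_le_of_symm A.toBilin' hnonneg hsymm u v

theorem sq_le_dotProduct_mulVec_self_of_mul_sqrt_le {A : Matrix ι ι ℝ} (hA : A.PosSemidef)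
    {u v : ι → ℝ} {s : ℝ} (hv : 0 < v ⬝ᵥ A *ᵥ v) (hs : 0 ≤ s)
    (h : s * √(v ⬝ᵥ A *ᵥ v) ≤ u ⬝ᵥ A *ᵥ v) :
    s ^ 2 ≤ u ⬝ᵥ A *ᵥ u := by
  refine le_of_mul_le_mul_right ?_ hv
  calc
    s ^ 2 * (v ⬝ᵥ A *ᵥ v) = (s * √(v ⬝ᵥ A *ᵥ v)) ^ 2 := by rw [mul_pow, Real.sq_sqrt hv.le]
    _ ≤ (u ⬝ᵥ A *ᵥ v) ^ 2 := by gcongr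
    _ ≤ (u ⬝ᵥ A *ᵥ u) * (v ⬝ᵥ A *ᵥ v) := dotProduct_mulVec_sq_le hA u v

/-- The set `C` of points where the quadratic function `xᵀAx + 2bᵀx` lies between `α` and `β`. -/
def quadraticBand (A : Matrix ι ι ℝ) (b : ι → ℝ) (α β : ℝ) : Set (ι → ℝ) :=
  {x | α ≤ x ⬝ᵥ A *ᵥ x + 2 * (b ⬝ᵥ x) ∧ x ⬝ᵥ A *ᵥ x + 2 * (b ⬝ᵥ x) ≤ β}

/-- The restriction `R(z)` of `quadraticBand A b α β` at `z`. The vector `c` is meant to solve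
`A *ᵥ c = b`; it takes the place of `A⁻¹ *ᵥ b`, so that `A` may be singular. -/
def quadraticBandRestriction (A : Matrix ι ι ℝ) (b c : ι → ℝ) (α β : ℝ) (z : ι → ℝ) :
    Set (ι → ℝ) :=
  {x | √(α + b ⬝ᵥ c) ≤
      (x ⬝ᵥ A *ᵥ z + b ⬝ᵥ (x + z) + b ⬝ᵥ c) / √(z ⬝ᵥ A *ᵥ z + 2 * (b ⬝ᵥ z) + b ⬝ᵥ c) ∧
    x ⬝ᵥ A *ᵥ x + 2 * (b ⬝ᵥ x) ≤ β}

section Restriction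

variable {A : Matrix ι ι ℝ} {b c z : ι → ℝ} {α β : ℝ}

theorem self_mem_quadraticBandRestriction (hz : z ∈ quadraticBand A b α β) :
    z ∈ quadraticBandRestriction A b c α β z := by
  refine ⟨?_, hz.2⟩
  rw [dotProduct_add, ← two_mul, Real.div_sqrt]
  gcongr
  exact hz.1

theorem quadraticBandRestriction_subset (hA : A.PosSemidef) (hc : A *ᵥ c = b)
    (hα : -(b ⬝ᵥ c) ≤ α) (hpos : 0 < z ⬝ᵥ A *ᵥ z + 2 * (b ⬝ᵥ z) + b ⬝ᵥ c) :
    quadraticBandRestriction A b c α β z ⊆ quadraticBand A b α β := by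
  rintro x ⟨hx, hxβ⟩
  refine ⟨?_, hxβ⟩
  have hsymm : A.IsSymm := isHermitian_iff_isSymm.1 hA.isHermitian
  rw [le_div_iff₀ (Real.sqrt_pos.2 hpos), ← add_dotProduct_mulVec_add_of_isSymm hsymm hc,
    ← add_dotProduct_mulVec_add_self_of_isSymm hsymm hc] at hx
  rw [← add_dotProduct_mulVec_add_self_of_isSymm hsymm hc] at hpos
  refine le_of_add_le_add_right (a := b ⬝ᵥ c) ?_
  calc
    α + b ⬝ᵥ c = √(α + b ⬝ᵥ c) ^ 2 := (Real.sq_sqrt (neg_le_iff_add_nonneg.1 hα)).symm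
    _ ≤ (x + c) ⬝ᵥ A *ᵥ (x + c) :=
      sq_le_dotProduct_mulVec_self_of_mul_sqrt_le hA hpos (Real.sqrt_nonneg _) hx
    _ = x ⬝ᵥ A *ᵥ x + 2 * (b ⬝ᵥ x) + b ⬝ᵥ c :=
      add_dotProduct_mulVec_add_self_of_isSymm hsymm hc x

theorem stmt8_general (hA : A.PosSemidef) (hc : A *ᵥ c = b) (hα : -(b ⬝ᵥ c) ≤ α)
    (hz : z ∈ quadraticBand A b α β)
    (hpos : 0 < z ⬝ᵥ A *ᵥ z + 2 * (b ⬝ᵥ z) + b ⬝ᵥ c) :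
    z ∈ quadraticBandRestriction A b c α β z ∧
      quadraticBandRestriction A b c α β z ⊆ quadraticBand A b α β :=
  ⟨self_mem_quadraticBandRestriction hz, quadraticBandRestriction_subset hA hc hα hpos⟩

end Restriction

end QuadraticBand

/-- The restriction of the quadratic set `C = {z : α ≤ zᵀAz + 2bᵀz ≤ β}` at a point `z ∈ C`
contains `z` and is a subset of `C`. -/
theorem stmt8 (n : ℕ) (A : Matrix (Fin n) (Fin n) ℝ) (hA : A.PosDef) (b : Fin n → ℝ)
    (α β : ℝ) (hαβ : α ≤ β) (hα : -(b ⬝ᵥ A⁻¹.mulVec b) ≤ α)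
    (z : Fin n → ℝ)
    (hzC : α ≤ z ⬝ᵥ A.mulVec z + 2 * (b ⬝ᵥ z) ∧ z ⬝ᵥ A.mulVec z + 2 * (b ⬝ᵥ z) ≤ β)
    (hpos : 0 < z ⬝ᵥ A.mulVec z + 2 * (b ⬝ᵥ z) + b ⬝ᵥ A⁻¹.mulVec b) :
    z ∈ {x : Fin n → ℝ |
        Real.sqrt (α + b ⬝ᵥ A⁻¹.mulVec b) ≤
          (x ⬝ᵥ A.mulVec z + b ⬝ᵥ (x + z) + b ⬝ᵥ A⁻¹.mulVec b) /
            Real.sqrt (z ⬝ᵥ A.mulVec z + 2 * (b ⬝ᵥ z) + b ⬝ᵥ A⁻¹.mulVec b) ∧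
        x ⬝ᵥ A.mulVec x + 2 * (b ⬝ᵥ x) ≤ β} ∧
      ∀ x : Fin n → ℝ,
        x ∈ {x : Fin n → ℝ |
          Real.sqrt (α + b ⬝ᵥ A⁻¹.mulVec b) ≤
            (x ⬝ᵥ A.mulVec z + b ⬝ᵥ (x + z) + b ⬝ᵥ A⁻¹.mulVec b) /
              Real.sqrt (z ⬝ᵥ A.mulVec z + 2 * (b ⬝ᵥ z) + b ⬝ᵥ A⁻¹.mulVec b) ∧
          x ⬝ᵥ A.mulVec x + 2 * (b ⬝ᵥ x) ≤ β} →
        α ≤ x ⬝ᵥ A.mulVec x + 2 * (b ⬝ᵥ x) ∧ x ⬝ᵥ A.mulVec x + 2 * (b ⬝ᵥ x) ≤ β := by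
  have hc : A *ᵥ (A⁻¹ *ᵥ b) = b := by
    rw [mulVec_mulVec, mul_nonsing_inv A ((isUnit_iff_isUnit_det A).1 hA.isUnit), one_mulVec]
  exact stmt8_general hA.posSemidef hc hα hzC hpos
end

section
/- Let 0 < r ≤ R, let C = {x ∈ ℝ^n : r ≤ ‖x‖_2 ≤ R} be the annulus, and let z ∈ C. Define R(z) = {x ∈ ℝ^n : xᵀz ≥ r‖z‖_2 and ‖x‖_2 ≤ R}. Then R(z) is convex, z ∈ R(z), and R(z) ⊆ C; that is, every x with xᵀz ≥ r‖z‖_2 and ‖x‖_2 ≤ R satisfies r ≤ ‖x‖_2 ≤ R. -/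
open scoped RealInnerProductSpace

/-- The closed annulus about the origin with inner radius `r` and outer radius `R`. -/
def closedAnnulus (E : Type*) [Norm E] (r R : ℝ) : Set E :=
  {x | r ≤ ‖x‖ ∧ ‖x‖ ≤ R}

section AnnulusRestriction

variable {E : Type*} [SeminormedAddCommGroup E] [InnerProductSpace ℝ E] {r R : ℝ} {x z : E}

/-- The restriction of the annulus at `z`: the part of the ball of radius `R` cut off by the
half-space with normal `z` at distance `r` from the origin. The half-space inequality is scaled by
`‖z‖`, which avoids normalizing `z`. -/
def annulusRestriction (r R : ℝ) (z : E) : Set E :=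
  {x | r * ‖z‖ ≤ ⟪x, z⟫ ∧ ‖x‖ ≤ R}

theorem convex_setOf_le_inner_left (c : ℝ) (z : E) : Convex ℝ {x : E | c ≤ ⟪x, z⟫} :=
  convex_halfSpace_ge ((innerₗ E).flip z).isLinear c

theorem le_norm_of_mul_norm_le_inner (hz : 0 < ‖z‖) (h : r * ‖z‖ ≤ ⟪x, z⟫) : r ≤ ‖x‖ :=
  le_of_mul_le_mul_right (h.trans (real_inner_le_norm x z)) hz

theorem convex_annulusRestriction (r R : ℝ) (z : E) : Convex ℝ (annulusRestriction r R z) := by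
  have convex_ball : Convex ℝ {x : E | ‖x‖ ≤ R} := by
    simpa only [Metric.closedBall, dist_zero_right] using convex_closedBall (0 : E) R
  exact (convex_setOf_le_inner_left (r * ‖z‖) z).inter convex_ball

theorem mem_annulusRestriction_self (hz : z ∈ closedAnnulus E r R) :
    z ∈ annulusRestriction r R z := by
  refine ⟨?_, hz.2⟩
  calc
    r * ‖z‖ ≤ ‖z‖ * ‖z‖ := by gcongr; exact hz.1
    _ = ⟪z, z⟫ := (real_inner_self_eq_norm_mul_norm z).symm

theorem annulusRestriction_subset_closedAnnulus (hz : r ≤ ‖z‖) :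
    annulusRestriction r R z ⊆ closedAnnulus E r R := by
  rintro x ⟨h_inner, h_norm⟩
  refine ⟨?_, h_norm⟩
  rcases le_or_gt r 0 with hr | hr
  · exact hr.trans (norm_nonneg x)
  · exact le_norm_of_mul_norm_le_inner (hr.trans_le hz) h_inner

theorem stmt10_general (hz : z ∈ closedAnnulus E r R) :
    Convex ℝ (annulusRestriction r R z) ∧ z ∈ annulusRestriction r R z ∧
      annulusRestriction r R z ⊆ closedAnnulus E r R :=
  ⟨convex_annulusRestriction r R z, mem_annulusRestriction_self hz,
    annulusRestriction_subset_closedAnnulus hz.1⟩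

end AnnulusRestriction

/-- The restriction `{x : xᵀz ≥ r‖z‖, ‖x‖ ≤ R}` of the annulus `{x : r ≤ ‖x‖ ≤ R}` at a
point `z` of the annulus is convex, contains `z`, and is a subset of the annulus. -/
theorem stmt10 (n : ℕ) (r R : ℝ) (hr : 0 < r) (hrR : r ≤ R)
    (z : EuclideanSpace ℝ (Fin n)) (hz : r ≤ ‖z‖ ∧ ‖z‖ ≤ R) :
    Convex ℝ {x : EuclideanSpace ℝ (Fin n) | r * ‖z‖ ≤ ⟪x, z⟫ ∧ ‖x‖ ≤ R} ∧
      z ∈ {x : EuclideanSpace ℝ (Fin n) | r * ‖z‖ ≤ ⟪x, z⟫ ∧ ‖x‖ ≤ R} ∧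
      {x : EuclideanSpace ℝ (Fin n) | r * ‖z‖ ≤ ⟪x, z⟫ ∧ ‖x‖ ≤ R} ⊆
        {x : EuclideanSpace ℝ (Fin n) | r ≤ ‖x‖ ∧ ‖x‖ ≤ R} := by
  exact stmt10_general hz
end
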